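/- With the hypotheses of the previous statement, one has ℤ·Irr(B) ∩ ℤ·Irr(G)^C = ℤ·{Φ_ψ : ψ ∈ b}, i.e., the virtual characters in the span of Irr(B) that vanish off C are exactly the ℤ-linear combinations of the dual basis elements Φ_ψ. -/

import Mathlib

open scoped BigOperators

/-- The standard inner product `⟨f, g⟩_G = (1/|G|) Σ_x f(x)·conj(g(x))` on functions
`G → ℂ`. -/
noncomputable def classInner (G : Type*) [Fintype G] (f g : G → ℂ) : ℂ :=
  (Fintype.card G : ℂ)⁻¹ * ∑ x : G, f x * (starRingEnd ℂ) (g x)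

/-- `res_C f`: the function agreeing with `f` on `C` and vanishing off `C`. -/
def resClass {G : Type*} (C : Set G) [DecidablePred (· ∈ C)] (f : G → ℂ) : G → ℂ :=
  fun x => if x ∈ C then f x else 0

/-!
Restriction to `C` is a self-adjoint idempotent `P` of the space of functions on `G`, and the
irreducible characters are an orthonormal basis of the space of class functions.

If `f` is an integral combination of the characters `χ i`, `i ∈ B`, and vanishes off `C`, then
`⟨f, P (χ i)⟩ = ⟨f, χ i⟩` is an integer for every `i`, hence so is `⟨f, b k⟩`, and
`f = ∑ k, ⟨f, b k⟩ Φ k`. Conversely, `Φ k` is a complex combination of the functions `P (χ i)`,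
`i ∈ B`; these are class functions orthogonal to `χ j` for `j ∉ B`, so
`Φ k = ∑ i ∈ B, ⟨Φ k, χ i⟩ χ i`. Here `⟨Φ k, χ i⟩ = ⟨Φ k, P (χ i)⟩` is the `k`-th coordinate of
`P (χ i)` in the basis `b`, an integer.
-/

universe u

open Submodule CategoryTheory
open scoped Matrix ComplexOrder MonoidAlgebra

section IntegralDuality

theorem map_mem_of_mem_span_int {E M F A : Type*} [AddCommGroup E] [AddCommGroup M]
    [FunLike F E M] [AddMonoidHomClass F E M] [SetLike A M] [AddSubgroupClass A M] (φ : F) (H : A)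
    {s : Set E} {x : E} (hx : x ∈ span ℤ s) (hs : ∀ y ∈ s, φ y ∈ H) : φ x ∈ H := by
  induction hx using span_induction with
  | mem y hy => exact hs y hy
  | zero => simp only [map_zero, zero_mem]
  | add y z _ _ hy hz => simpa only [map_add] using add_mem hy hz
  | smul n y _ hy => simpa only [map_zsmul] using zsmul_mem hy n

variable {R E ι κ : Type*} [CommRing R] [AddCommGroup E] [Module R E] {σ : R →+* R}
  {S : E →ₗ[R] E →ₛₗ[σ] R}

theorem eq_zero_of_mem_span_of_apply_eq_zero (hS : ∀ x, S x x = 0 → x = 0) {s : Set E} {x : E}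
    (hx : x ∈ span R s) (hs : ∀ y ∈ s, S x y = 0) : x = 0 := by
  have span_le_ker : span R s ≤ LinearMap.ker (S x) := span_le.2 hs
  exact hS x (span_le_ker hx)

/-- The family `Φ` lies in the span of `b` and is dual to it for the sesquilinear form `S`. The
orthonormal families are those dual to themselves. -/
structure IsDualFamily [DecidableEq κ] (S : E →ₗ[R] E →ₛₗ[σ] R) (b Φ : κ → E) : Prop where
  mem_span : ∀ k, Φ k ∈ span R (Set.range b)
  apply_eq_ite : ∀ k l, S (Φ k) (b l) = if k = l then 1 else 0

namespace IsDualFamily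

variable [DecidableEq κ] {b Φ : κ → E}

theorem eq_sum_smul [Fintype κ] (h : IsDualFamily S b Φ) (hS : ∀ x, S x x = 0 → x = 0) {x : E}
    (hx : x ∈ span R (Set.range b)) : x = ∑ k, S x (b k) • Φ k := by
  rw [← sub_eq_zero]
  refine eq_zero_of_mem_span_of_apply_eq_zero hS
    (sub_mem hx (sum_mem fun k _ => smul_mem _ _ (h.mem_span k))) ?_
  rintro _ ⟨l, rfl⟩
  simp [h.apply_eq_ite]

theorem mem_span_int [Finite κ] (h : IsDualFamily S b Φ) (hS : ∀ x, S x x = 0 → x = 0) {x : E}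
    (hx : x ∈ span R (Set.range b)) (hint : ∀ k, S x (b k) ∈ (Int.castRingHom R).range) :
    x ∈ span ℤ (Set.range Φ) := by
  cases nonempty_fintype κ
  rw [h.eq_sum_smul hS hx]
  refine sum_mem fun k _ => ?_
  obtain ⟨m, hm⟩ := hint k
  rw [← hm, eq_intCast, Int.cast_smul_eq_zsmul]
  exact smul_mem _ _ (subset_span (Set.mem_range_self k))

theorem apply_mem_range_intCast (h : IsDualFamily S b Φ) (k l : κ) :
    S (Φ k) (b l) ∈ (Int.castRingHom R).range := by
  rw [h.apply_eq_ite]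
  split_ifs
  exacts [one_mem _, zero_mem _]

theorem apply_mem_range_intCast_of_mem_span_int (h : IsDualFamily S b Φ) {x : E}
    (hx : x ∈ span ℤ (Set.range Φ)) (l : κ) : S x (b l) ∈ (Int.castRingHom R).range := by
  refine map_mem_of_mem_span_int (S.flip (b l)) _ hx ?_
  rintro _ ⟨k, rfl⟩
  exact h.apply_mem_range_intCast k l

end IsDualFamily

section Orthonormal

variable [DecidableEq ι] {v : ι → E} {B : Set ι}

theorem IsDualFamily.comp_subtype_val (hv : IsDualFamily S v v) (B : Set ι) :
    IsDualFamily S (fun i : B => v i) (fun i : B => v i) where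
  mem_span i := subset_span (Set.mem_range_self i)
  apply_eq_ite i j := by simp only [hv.apply_eq_ite, Subtype.ext_iff]

theorem IsDualFamily.mem_span_image_of_apply_eq_zero [Finite ι] (hv : IsDualFamily S v v)
    (hS : ∀ x, S x x = 0 → x = 0) {x : E} (hx : x ∈ span R (Set.range v))
    (hxB : ∀ j ∉ B, S x (v j) = 0) : x ∈ span R (v '' B) := by
  cases nonempty_fintype ι
  rw [hv.eq_sum_smul hS hx]
  refine sum_mem fun i _ => ?_
  by_cases hi : i ∈ B
  · exact smul_mem _ _ (subset_span (Set.mem_image_of_mem v hi))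
  · simp only [hxB i hi, zero_smul, zero_mem]

end Orthonormal

section Projection

variable {v : ι → E} {P : E →ₗ[R] E} {B : Set ι} {b Φ : κ → E}

theorem apply_map_eq_of_mem_range (hPS : S.IsSelfAdjoint P) (hP : IsIdempotentElem P) {x : E}
    (hx : x ∈ P.range) (y : E) : S x (P y) = S x y := by
  rw [← hPS, (LinearMap.IsIdempotentElem.mem_range_iff hP).1 hx]

theorem span_eq_of_span_int_eq {s t : Set E} (h : span ℤ s = span ℤ t) :
    span R s = span R t := by
  rw [← span_span_of_tower ℤ R s, h, span_span_of_tower]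

theorem span_range_le_range_of_span_int_eq
    (hb : span ℤ (Set.range b) = span ℤ ((fun i => P (v i)) '' B)) :
    span R (Set.range b) ≤ P.range := by
  rw [span_eq_of_span_int_eq hb]
  exact span_le.2 (Set.image_subset_iff.2 fun i _ => P.mem_range_self (v i))

variable [DecidableEq ι] [DecidableEq κ]

theorem mem_span_int_dual_of_mem_range [Finite κ] (hS : ∀ x, S x x = 0 → x = 0)
    (hPS : S.IsSelfAdjoint P) (hP : IsIdempotentElem P) (hv : IsDualFamily S v v)
    (hb : span ℤ (Set.range b) = span ℤ ((fun i => P (v i)) '' B)) (hΦ : IsDualFamily S b Φ)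
    {x : E} (hx : x ∈ span ℤ (v '' B)) (hxP : x ∈ P.range) : x ∈ span ℤ (Set.range Φ) := by
  have x_mem_span_b : x ∈ span R (Set.range b) := by
    rw [span_eq_of_span_int_eq hb, ← Set.image_image P v,
      ← (LinearMap.IsIdempotentElem.mem_range_iff hP).1 hxP, span_image]
    exact mem_map_of_mem (span_le_restrictScalars ℤ R _ hx)
  refine hΦ.mem_span_int hS x_mem_span_b fun k => ?_
  have b_mem : b k ∈ span ℤ ((fun i => P (v i)) '' B) :=
    hb ▸ subset_span (Set.mem_range_self k)
  refine map_mem_of_mem_span_int (S x) _ b_mem ?_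
  rintro _ ⟨i, -, rfl⟩
  rw [apply_map_eq_of_mem_range hPS hP hxP]
  exact hv.apply_mem_range_intCast_of_mem_span_int (span_mono (Set.image_subset_range v B) hx) i

theorem dual_mem_span_int_image (hS : ∀ x, S x x = 0 → x = 0)
    (hPS : S.IsSelfAdjoint P) (hP : IsIdempotentElem P) (hv : IsDualFamily S v v) (hB : B.Finite)
    (hPB : ∀ i ∈ B, P (v i) ∈ span R (v '' B))
    (hb : span ℤ (Set.range b) = span ℤ ((fun i => P (v i)) '' B)) (hΦ : IsDualFamily S b Φ)
    (k : κ) : Φ k ∈ span ℤ (v '' B) := by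
  have := hB.to_subtype
  have span_b_le : span R (Set.range b) ≤ span R (v '' B) := by
    rw [span_eq_of_span_int_eq hb]
    exact span_le.2 (Set.image_subset_iff.2 hPB)
  have Φ_mem_span : Φ k ∈ span R (v '' B) := span_b_le (hΦ.mem_span k)
  rw [Set.image_eq_range] at Φ_mem_span ⊢
  refine (hv.comp_subtype_val B).mem_span_int hS Φ_mem_span fun i => ?_
  rw [← apply_map_eq_of_mem_range hPS hP (span_range_le_range_of_span_int_eq hb (hΦ.mem_span k))]
  have Pv_mem : P (v i) ∈ span ℤ (Set.range b) :=
    hb ▸ subset_span (Set.mem_image_of_mem (fun i => P (v i)) i.2)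
  refine map_mem_of_mem_span_int (S (Φ k)) _ Pv_mem ?_
  rintro _ ⟨l, rfl⟩
  exact hΦ.apply_mem_range_intCast k l

theorem mem_span_int_image_and_mem_range_iff [Finite κ] (hS : ∀ x, S x x = 0 → x = 0)
    (hPS : S.IsSelfAdjoint P) (hP : IsIdempotentElem P) (hv : IsDualFamily S v v) (hB : B.Finite)
    (hPB : ∀ i ∈ B, P (v i) ∈ span R (v '' B))
    (hb : span ℤ (Set.range b) = span ℤ ((fun i => P (v i)) '' B)) (hΦ : IsDualFamily S b Φ)
    {x : E} : x ∈ span ℤ (v '' B) ∧ x ∈ P.range ↔ x ∈ span ℤ (Set.range Φ) := by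
  refine ⟨fun h => mem_span_int_dual_of_mem_range hS hPS hP hv hb hΦ h.1 h.2, fun hx => ⟨?_, ?_⟩⟩
  · exact span_le.2 (Set.range_subset_iff.2 (dual_mem_span_int_image hS hPS hP hv hB hPB hb hΦ)) hx
  · refine map_mem_of_mem_span_int (AddMonoidHom.id E) P.range hx ?_
    exact Set.forall_mem_range.2 fun k => span_range_le_range_of_span_int_eq hb (hΦ.mem_span k)

end Projection

end IntegralDuality

section CharacterInverse

variable {G 𝕜 : Type*} [Group G] [Finite G] [RCLike 𝕜]

theorem exists_posDef_conjTranspose_mul_mul_eq {n : Type*} [Fintype n] [DecidableEq n]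
    (M : G →* Matrix n n 𝕜) : ∃ P : Matrix n n 𝕜, P.PosDef ∧ ∀ g, (M g)ᴴ * P * M g = P := by
  classical
  cases nonempty_fintype G
  refine ⟨∑ x, (M x)ᴴ * M x, ?_, fun g => ?_⟩
  · rw [← Finset.add_sum_erase _ _ (Finset.mem_univ 1), map_one, Matrix.conjTranspose_one, mul_one]
    exact Matrix.PosDef.one.add_posSemidef
      (Matrix.posSemidef_sum _ fun x _ => Matrix.posSemidef_conjTranspose_mul_self _)
  · rw [Finset.mul_sum, Finset.sum_mul, ← Equiv.sum_comp (Equiv.mulRight g) fun x => (M x)ᴴ * M x]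
    simp only [Equiv.coe_mulRight, map_mul, Matrix.conjTranspose_mul, mul_assoc]

theorem trace_map_inv_eq_star {n : Type*} [Fintype n] [DecidableEq n] (M : G →* Matrix n n 𝕜)
    (g : G) : (M g⁻¹).trace = star (M g).trace := by
  obtain ⟨P, hP, hPinv⟩ := exists_posDef_conjTranspose_mul_mul_eq M
  have P_det : IsUnit P.det := (Matrix.isUnit_iff_isUnit_det P).1 hP.isUnit
  have intertwine : P * M g⁻¹ = (M g)ᴴ * P := by
    rw [← hPinv g, mul_assoc, ← map_mul, mul_inv_cancel, map_one, mul_one, hPinv g]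
  calc (M g⁻¹).trace = (P⁻¹ * (P * M g⁻¹)).trace := by
        rw [Matrix.nonsing_inv_mul_cancel_left _ _ P_det]
    _ = ((M g)ᴴ * P * P⁻¹).trace := by rw [intertwine, Matrix.trace_mul_comm]
    _ = star (M g).trace := by
        rw [Matrix.mul_nonsing_inv_cancel_right _ _ P_det, Matrix.trace_conjTranspose]

theorem character_inv_eq_star {V : Type*} [AddCommGroup V] [Module 𝕜 V] [FiniteDimensional 𝕜 V]
    (ρ : Representation 𝕜 G V) (g : G) : ρ.character g⁻¹ = star (ρ.character g) := by
  let e := LinearMap.toMatrixAlgEquiv (Module.finBasis 𝕜 V)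
  have character_eq (x : G) : ρ.character x = (e (ρ x)).trace :=
    LinearMap.trace_eq_matrix_trace 𝕜 (Module.finBasis 𝕜 V) (ρ x)
  rw [character_eq, character_eq]
  exact trace_map_inv_eq_star (e.toMulEquiv.toMonoidHom.comp ρ) g

end CharacterInverse

section Completeness

/-- The space of class functions, i.e. of functions that are constant on conjugacy classes. -/
def classFunctions (k G : Type*) [Semiring k] [Group G] : Submodule k (G → k) where
  carrier := {f | ∀ g x, f (x * g * x⁻¹) = f g}
  zero_mem' _ _ := rfl
  add_mem' hf₁ hf₂ g x := congrArg₂ (· + ·) (hf₁ g x) (hf₂ g x)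
  smul_mem' c _ hf g x := congrArg (c • ·) (hf g x)

theorem sum_smul_comp_eq_comp_sum_smul {k G V : Type*} [CommSemiring k] [Group G] [Fintype G]
    [AddCommMonoid V] [Module k V] {f : G → k} (hf : f ∈ classFunctions k G)
    (ρ : Representation k G V) (x : G) :
    (∑ g, f g • ρ g) ∘ₗ ρ x = ρ x ∘ₗ ∑ g, f g • ρ g := by
  change (∑ g, f g • ρ g) * ρ x = ρ x * ∑ g, f g • ρ g
  rw [Finset.sum_mul, Finset.mul_sum, ← Equiv.sum_comp (MulAut.conj x).toEquiv]
  refine Finset.sum_congr rfl fun g _ => ?_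
  change f (x * g * x⁻¹) • ρ (x * g * x⁻¹) * ρ x = ρ x * f g • ρ g
  rw [hf, smul_mul_assoc, mul_smul_comm, ← map_mul, ← map_mul, inv_mul_cancel_right]

theorem asAlgebraHom_ofModule' {k G M : Type*} [CommSemiring k] [Monoid G] [AddCommMonoid M]
    [Module k M] [Module k[G] M] [IsScalarTower k k[G] M] :
    (Representation.ofModule' (k := k) (G := G) M).asAlgebraHom = Algebra.lsmul k k M :=
  (MonoidAlgebra.lift k (M →ₗ[k] M) G).apply_symm_apply _

theorem isIrreducible_ofModule' {k G M : Type*} [Field k] [Monoid G] [AddCommGroup M] [Module k M]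
    [Module k[G] M] [IsScalarTower k k[G] M] [IsSimpleModule k[G] M] :
    (Representation.ofModule' (k := k) (G := G) M).IsIrreducible := by
  let ρ : Representation k G M := Representation.ofModule' M
  let asModuleEquiv : ρ.asModule ≃ₗ[k[G]] M :=
    { ρ.asModuleEquiv.toAddEquiv with
      map_smul' r x := by
        have map_smul := ρ.asModuleEquiv_map_smul r x
        rwa [asAlgebraHom_ofModule'] at map_smul }
  exact ρ.irreducible_iff_isSimpleModule_asModule.2 (IsSimpleModule.congr asModuleEquiv)

theorem eq_zero_of_forall_comp_eq_of_trace_eq_zero {k G V : Type*} [Field k] [IsAlgClosed k]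
    [CharZero k] [Monoid G] [AddCommGroup V] [Module k V] [FiniteDimensional k V]
    (ρ : Representation k G V) [ρ.IsIrreducible] {T : V →ₗ[k] V}
    (hT : ∀ x, T ∘ₗ ρ x = ρ x ∘ₗ T) (htrace : LinearMap.trace k V T = 0) : T = 0 := by
  obtain ⟨c, hc⟩ :=
    Representation.IsIrreducible.algebraMap_intertwiningMap_bijective_of_isAlgClosed.2
      (⟨T, hT⟩ : ρ.IntertwiningMap ρ)
  have T_eq : T = c • LinearMap.id :=
    congrArg Representation.IntertwiningMap.toLinearMap hc.symm
  have : Nontrivial V := IsSimpleModule.nontrivial k[G] ρ.asModule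
  have finrank_ne_zero : (Module.finrank k V : k) ≠ 0 :=
    Nat.cast_ne_zero.2 Module.finrank_pos.ne'
  rw [T_eq, map_smul, LinearMap.trace_id, smul_eq_mul] at htrace
  rw [T_eq, (mul_eq_zero.1 htrace).resolve_right finrank_ne_zero, zero_smul]

theorem sum_smul_eq_zero_of_isIrreducible {k G V : Type*} [Field k] [IsAlgClosed k] [CharZero k]
    [Group G] [Fintype G] [AddCommGroup V] [Module k V] [FiniteDimensional k V]
    (ρ : Representation k G V) [ρ.IsIrreducible] {f : G → k} (hf : f ∈ classFunctions k G)
    (horth : ∑ g, f g * ρ.character g = 0) : ∑ g, f g • ρ g = 0 := by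
  refine eq_zero_of_forall_comp_eq_of_trace_eq_zero ρ (sum_smul_comp_eq_comp_sum_smul hf ρ) ?_
  rw [map_sum, ← horth]
  exact Finset.sum_congr rfl fun g _ => map_smul _ (f g) (ρ g)

variable {k G : Type u} [Field k] [IsAlgClosed k] [CharZero k] [Group G]

theorem simple_of_isIrreducible [Finite G] {V : Type u} [AddCommGroup V] [Module k V]
    [FiniteDimensional k V] (ρ : Representation k G V) [ρ.IsIrreducible] :
    Simple (FDRep.of ρ) := by
  cases nonempty_fintype G
  have card_ne_zero : (Nat.card G : k) ≠ 0 := Nat.cast_ne_zero.2 Nat.card_pos.ne'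
  have := invertibleOfNonzero card_ne_zero
  have norm_one := Representation.card_inv_mul_sum_char_mul_char_eq_finrank ρ ρ
  rw [Representation.IsIrreducible.finrank_intertwiningMap_self,
    inv_mul_eq_iff_eq_mul₀ card_ne_zero, Nat.cast_one, mul_one] at norm_one
  exact (FDRep.simple_iff_char_is_norm_one (FDRep.of ρ)).2 norm_one

variable [Fintype G] {f : G → k}

theorem sum_smul_of_smul_eq_zero_of_isSimpleModule {M : Type u} [AddCommGroup M] [Module k M]
    [Module k[G] M] [IsScalarTower k k[G] M] [IsSimpleModule k[G] M]
    (hf : f ∈ classFunctions k G)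
    (horth : ∀ V : FDRep k G, Simple V → ∑ g, f g * V.character g = 0) (m : M) :
    (∑ g, f g • MonoidAlgebra.of k G g) • m = 0 := by
  let ρ : Representation k G M := Representation.ofModule' M
  have : ρ.IsIrreducible := isIrreducible_ofModule'
  have : FiniteDimensional k M := Module.Finite.trans k[G] M
  have acts_as_zero : ρ.asAlgebraHom (∑ g, f g • MonoidAlgebra.of k G g) = 0 := by
    simp only [map_sum, map_smul, Representation.asAlgebraHom_of]
    exact sum_smul_eq_zero_of_isIrreducible ρ hf (horth (FDRep.of ρ) (simple_of_isIrreducible ρ))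
  rw [asAlgebraHom_ofModule'] at acts_as_zero
  exact LinearMap.congr_fun acts_as_zero m

-- The central element `∑ g, f g • g` of the semisimple algebra `k[G]` kills every simple module, so
-- it lies in the Jacobson radical, which is zero.
theorem eq_zero_of_forall_sum_mul_character_eq_zero (hf : f ∈ classFunctions k G)
    (horth : ∀ V : FDRep k G, Simple V → ∑ g, f g * V.character g = 0) : f = 0 := by
  classical
  let z : k[G] := ∑ g, f g • MonoidAlgebra.of k G g
  have z_mem_jacobson : z ∈ Module.jacobson k[G] k[G] := by
    refine mem_sInf.2 fun I hI => ?_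
    have : IsSimpleModule k[G] (k[G] ⧸ I) := isSimpleModule_iff_isCoatom.2 hI
    have z_smul_one := sum_smul_of_smul_eq_zero_of_isSimpleModule hf horth (I.mkQ 1)
    rwa [← map_smul, smul_eq_mul, mul_one, mkQ_apply, Quotient.mk_eq_zero] at z_smul_one
  have z_eq_zero : z = 0 := by
    rwa [IsSemisimpleModule.jacobson_eq_bot, mem_bot] at z_mem_jacobson
  funext g
  have coeff_z : z.coeff g = f g := by
    simp [z, MonoidAlgebra.of_apply, Finsupp.single_apply]
  rw [← coeff_z, z_eq_zero]
  rfl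

end Completeness

section Restriction

variable {G : Type*} (C : Set G) [DecidablePred (· ∈ C)]

/-- `resClass C` as a linear endomorphism of the space of functions on `G`. -/
def resClassLinearMap : (G → ℂ) →ₗ[ℂ] G → ℂ where
  toFun := resClass C
  map_add' f g := by
    funext x
    by_cases hx : x ∈ C <;> simp [resClass, hx]
  map_smul' c f := by
    funext x
    by_cases hx : x ∈ C <;> simp [resClass, hx]

theorem isIdempotentElem_resClassLinearMap : IsIdempotentElem (resClassLinearMap C) := by
  ext f x
  by_cases hx : x ∈ C <;> simp [resClassLinearMap, resClass, hx]

theorem mem_range_resClassLinearMap_iff {f : G → ℂ} :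
    f ∈ (resClassLinearMap C).range ↔ ∀ x ∉ C, f x = 0 := by
  rw [LinearMap.IsIdempotentElem.mem_range_iff (isIdempotentElem_resClassLinearMap C), funext_iff]
  simp [resClassLinearMap, resClass, eq_comm]

variable {C} in
theorem resClass_mem_classFunctions [Group G] (hC : ∀ g x, g ∈ C → x * g * x⁻¹ ∈ C) {f : G → ℂ}
    (hf : f ∈ classFunctions ℂ G) : resClass C f ∈ classFunctions ℂ G := by
  intro g x
  have conj_mem_iff : x * g * x⁻¹ ∈ C ↔ g ∈ C :=
    ⟨fun h => by simpa [mul_assoc] using hC _ x⁻¹ h, hC g x⟩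
  simp only [resClass, conj_mem_iff, hf g x]

end Restriction

section ClassInner

variable (G : Type*) [Fintype G]

/-- `classInner` as a sesquilinear form, linear in its first argument. -/
noncomputable def classForm : (G → ℂ) →ₗ[ℂ] (G → ℂ) →ₗ⋆[ℂ] ℂ :=
  LinearMap.mk₂'ₛₗ (RingHom.id ℂ) (starRingEnd ℂ) (classInner G)
    (fun f g h => by simp [classInner, add_mul, Finset.sum_add_distrib, mul_add])
    (fun c f g => by simp [classInner, Finset.mul_sum, mul_assoc, mul_left_comm])
    (fun f g h => by simp [classInner, Finset.sum_add_distrib, mul_add])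
    (fun c f g => by simp [classInner, Finset.mul_sum, mul_left_comm])

variable {G}

theorem classForm_apply (f g : G → ℂ) : classForm G f g = classInner G f g := rfl

theorem classInner_conj_symm (f g : G → ℂ) :
    starRingEnd ℂ (classInner G f g) = classInner G g f := by
  simp [classInner, mul_comm]

theorem eq_zero_of_classForm_self_eq_zero (f : G → ℂ) (h : classForm G f f = 0) : f = 0 := by
  funext x
  have : Nonempty G := ⟨x⟩
  have sum_normSq : ∑ y, Complex.normSq (f y) = 0 := by
    simpa [classForm_apply, classInner, Complex.mul_conj, ← Complex.ofReal_sum] using h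
  exact Complex.normSq_eq_zero.1
    ((Finset.sum_eq_zero_iff_of_nonneg fun y _ => Complex.normSq_nonneg _).1 sum_normSq x
      (Finset.mem_univ x))

theorem isSelfAdjoint_resClassLinearMap (C : Set G) [DecidablePred (· ∈ C)] :
    (classForm G).IsSelfAdjoint (resClassLinearMap C) := by
  intro f g
  change classInner G (resClass C f) g = classInner G f (resClass C g)
  simp [classInner, resClass, apply_ite]

end ClassInner

section IrreducibleCharacters

open scoped Classical in
theorem classInner_character {G : Type*} [Group G] [Fintype G] (V W : FDRep ℂ G) [Simple V]
    [Simple W] :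
    classInner G V.character W.character = if V.character = W.character then 1 else 0 := by
  have := invertibleOfNonzero (Nat.cast_ne_zero.2 Nat.card_pos.ne' : (Nat.card G : ℂ) ≠ 0)
  have classInner_eq (V W : FDRep ℂ G) [Simple V] [Simple W] :
      classInner G V.character W.character = if Nonempty (V ≅ W) then 1 else 0 := by
    have conj_character (g : G) : starRingEnd ℂ (W.character g) = W.character g⁻¹ :=
      (character_inv_eq_star W.ρ g).symm
    simpa [classInner, conj_character] using FDRep.char_orthonormal V W
  split_ifs with h
  · rw [h, classInner_eq, if_pos ⟨Iso.refl W⟩]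
  · rw [classInner_eq, if_neg]
    exact fun ⟨i⟩ => h (FDRep.char_iso i)

variable {G : Type} [Group G]

/-- The family `χ` lists the irreducible complex characters of `G` without repetition. -/
structure EnumeratesIrreducibleCharacters {ι : Type*} (χ : ι → G → ℂ) : Prop where
  exists_simple : ∀ i, ∃ V : FDRep ℂ G, Simple V ∧ V.character = χ i
  exists_index : ∀ V : FDRep ℂ G, Simple V → ∃ i, V.character = χ i
  injective : Function.Injective χ

namespace EnumeratesIrreducibleCharacters

variable {ι : Type*} {χ : ι → G → ℂ}

theorem mem_classFunctions (hχ : EnumeratesIrreducibleCharacters χ) (i : ι) :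
    χ i ∈ classFunctions ℂ G := by
  obtain ⟨V, -, hV⟩ := hχ.exists_simple i
  exact hV ▸ FDRep.char_conj V

section Orthogonality

variable [Fintype G]

theorem isDualFamily [DecidableEq ι] (hχ : EnumeratesIrreducibleCharacters χ) :
    IsDualFamily (classForm G) χ χ where
  mem_span i := subset_span (Set.mem_range_self i)
  apply_eq_ite i j := by
    obtain ⟨V, hV, hVi⟩ := hχ.exists_simple i
    obtain ⟨W, hW, hWj⟩ := hχ.exists_simple j
    rw [classForm_apply, ← hVi, ← hWj, classInner_character, hVi, hWj]
    simp only [hχ.injective.eq_iff]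

theorem eq_zero_of_classInner_eq_zero (hχ : EnumeratesIrreducibleCharacters χ) {f : G → ℂ}
    (hf : f ∈ classFunctions ℂ G) (horth : ∀ i, classInner G f (χ i) = 0) : f = 0 := by
  refine star_eq_zero.1 (eq_zero_of_forall_sum_mul_character_eq_zero
    (fun g x => congrArg star (hf g x)) fun V hV => ?_)
  obtain ⟨i, hi⟩ := hχ.exists_index V hV
  have conj_horth : classInner G (χ i) f = 0 := by
    rw [← classInner_conj_symm, horth, map_zero]
  simpa [classInner, hi, mul_comm] using conj_horth

end Orthogonality

theorem mem_span_range [Finite G] [Finite ι] (hχ : EnumeratesIrreducibleCharacters χ)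
    {f : G → ℂ} (hf : f ∈ classFunctions ℂ G) : f ∈ span ℂ (Set.range χ) := by
  classical
  cases nonempty_fintype G
  cases nonempty_fintype ι
  let p : G → ℂ := ∑ i, classInner G f (χ i) • χ i
  have sub_orthogonal (j : ι) : classForm G (f - p) (χ j) = 0 := by
    simp [p, hχ.isDualFamily.apply_eq_ite, classForm_apply]
  have sub_mem : f - p ∈ classFunctions ℂ G :=
    sub_mem hf (sum_mem fun i _ => smul_mem _ _ (hχ.mem_classFunctions i))
  rw [sub_eq_zero.1 (hχ.eq_zero_of_classInner_eq_zero sub_mem sub_orthogonal)]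
  exact sum_mem fun i _ => smul_mem _ _ (subset_span (Set.mem_range_self i))

theorem resClass_mem_span_image [Fintype G] [Finite ι] (hχ : EnumeratesIrreducibleCharacters χ)
    {C : Set G} [DecidablePred (· ∈ C)] (hC : ∀ g x, g ∈ C → x * g * x⁻¹ ∈ C) {B : Set ι} {i : ι}
    (hi : ∀ j ∉ B, classInner G (resClass C (χ i)) (resClass C (χ j)) = 0) :
    resClass C (χ i) ∈ span ℂ (χ '' B) := by
  classical
  refine hχ.isDualFamily.mem_span_image_of_apply_eq_zero eq_zero_of_classForm_self_eq_zero
    (hχ.mem_span_range (resClass_mem_classFunctions hC (hχ.mem_classFunctions i))) fun j hj => ?_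
  exact (apply_map_eq_of_mem_range (isSelfAdjoint_resClassLinearMap C)
    (isIdempotentElem_resClassLinearMap C) ⟨χ i, rfl⟩ (χ j)).symm.trans (hi j hj)

end EnumeratesIrreducibleCharacters

end IrreducibleCharacters

/-- **[Brunat–Gramain, Corollary 2.3], second part.**
With the same setup as the first part (`G` finite, `C` a union of conjugacy classes,
`χ` an enumeration of `Irr(G)`, `B` a union of `C`-blocks, `b` a `ℤ`-basis of
`ℤ·Irr(B)^C` and `Φ` its dual basis), one has
`ℤ·Irr(B) ∩ ℤ·Irr(G)^C = ℤ·{Φ_ψ : ψ ∈ b}`: the virtual characters in the `ℤ`-span of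
`Irr(B)` that vanish off `C` are exactly the `ℤ`-linear combinations of the dual basis
elements `Φ_ψ`. -/
theorem stmt_15 {G : Type} [Group G] [Fintype G] {ι κ : Type*} [Fintype ι]
    [DecidableEq ι] [Fintype κ] [DecidableEq κ]
    (χ : ι → G → ℂ) (C : Set G) [DecidablePred (· ∈ C)]
    (hCconj : ∀ g x : G, g ∈ C → x * g * x⁻¹ ∈ C)
    -- `χ` enumerates the irreducible characters of `G`:
    (hirr : ∀ i, ∃ V : FDRep ℂ G, CategoryTheory.Simple V ∧ V.character = χ i)
    (hall : ∀ V : FDRep ℂ G, CategoryTheory.Simple V → ∃ i, V.character = χ i)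
    (hinj : Function.Injective χ)
    (B : Finset ι)
    -- `B` is a union of `C`-blocks:
    (hB : ∀ i ∈ B, ∀ j ∉ B, classInner G (resClass C (χ i)) (resClass C (χ j)) = 0)
    (b : κ → G → ℂ)
    -- `b` is a `ℤ`-basis of `ℤ·Irr(B)^C`:
    (hb_mem : ∀ k, b k ∈ Submodule.span ℤ ((fun i => resClass C (χ i)) '' ↑B))
    (hb_indep : LinearIndependent ℤ b)
    (d : ι → κ → ℤ)
    (hd : ∀ i ∈ B, resClass C (χ i) = ∑ k, d i k • b k)
    (Φ : κ → G → ℂ)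
    -- `Φ` is the dual basis of `b` inside `ℂ·Irr(B)^C`:
    (hΦ_mem : ∀ k, Φ k ∈ Submodule.span ℂ (Set.range b))
    (hΦ_dual : ∀ k k', classInner G (b k') (Φ k) = if k' = k then 1 else 0) :
    ∀ f : G → ℂ,
      (f ∈ Submodule.span ℤ ((fun i => χ i) '' ↑B) ∧
        f ∈ Submodule.span ℤ (Set.range χ) ∧ ∀ x ∉ C, f x = 0) ↔
      f ∈ Submodule.span ℤ (Set.range Φ) := by
  intro f
  have hχ : EnumeratesIrreducibleCharacters χ := ⟨hirr, hall, hinj⟩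
  have span_b : span ℤ (Set.range b) = span ℤ ((fun i => resClassLinearMap C (χ i)) '' B) := by
    refine (span_le.2 (Set.range_subset_iff.2 hb_mem)).antisymm
      (span_le.2 (Set.image_subset_iff.2 fun i hi => ?_))
    change resClass C (χ i) ∈ span ℤ (Set.range b)
    rw [hd i hi]
    exact sum_mem fun k _ => smul_mem _ _ (subset_span (Set.mem_range_self k))
  have Φ_dual : IsDualFamily (classForm G) b Φ :=
    ⟨hΦ_mem, fun k l => by
      rw [classForm_apply, ← classInner_conj_symm, hΦ_dual, apply_ite (starRingEnd ℂ), map_one,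
        map_zero, if_congr eq_comm rfl rfl]⟩
  rw [← mem_span_int_image_and_mem_range_iff eq_zero_of_classForm_self_eq_zero
    (isSelfAdjoint_resClassLinearMap C) (isIdempotentElem_resClassLinearMap C) hχ.isDualFamily
    B.finite_toSet (fun i hi => hχ.resClass_mem_span_image hCconj (hB i hi)) span_b Φ_dual,
    mem_range_resClassLinearMap_iff]
  exact ⟨fun ⟨hfB, _, hfC⟩ => ⟨hfB, hfC⟩,
    fun ⟨hfB, hfC⟩ => ⟨hfB, span_mono (Set.image_subset_range χ B) hfB, hfC⟩⟩
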